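/- arXiv:2204.08076 — 2 statements merged into one kernel-verified Lean document; each statement's English description precedes it below -/
import Mathlib

section
/- In the parabolic case α = β = 1 (so X = [[1,1],[0,1]] and Y = [[1,0],[z,1]]), for any z ∈ ℂ and any Farey neighbours p/q < r/s in lowest terms with p, r ≥ 0, q, s ≥ 1, qr − ps = 1, and both fractions in [0,1], one has tr(W_{p/q}(z) · W_{r/s}(z)) = 4 − tr(W_{(p+r)/(q+s)}(z)). -/
/-- Modified ceiling: `⌈x⌉` if `x ∉ ℤ`, and `x + 1` if `x ∈ ℤ`. -/
def mceil (x : ℚ) : ℤ := if x.den = 1 then x.num + 1 else ⌈x⌉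

/-- The sign `ε_i = (−1)^{⌈pi/q⌉' + i + 1}` of the `i`-th letter of the Farey word `W_{p/q}`. -/
def fareySign (p q i : ℕ) : ℤˣ := (-1) ^ (mceil ((p * i : ℚ) / q) + (i : ℤ) + 1)

/-- The matrix `X = [[α, 1], [0, α⁻¹]]`. -/
noncomputable def Xmat (α : ℂ) : Matrix (Fin 2) (Fin 2) ℂ := !![α, 1; 0, α⁻¹]

/-- The matrix `Y = [[β, 0], [z, β⁻¹]]`. -/
noncomputable def Ymat (β z : ℂ) : Matrix (Fin 2) (Fin 2) ℂ := !![β, 0; z, β⁻¹]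

/-- The `i`-th letter (`1 ≤ i ≤ 2q`) of the Farey word `W_{p/q}`, interpreted as a matrix:
it is `Y^{ε_i}` if `i` is odd and `X^{ε_i}` if `i` is even. -/
noncomputable def fareyLetterM (α β z : ℂ) (p q i : ℕ) : Matrix (Fin 2) (Fin 2) ℂ :=
  let M := if i % 2 = 1 then Ymat β z else Xmat α
  if fareySign p q i = 1 then M else M⁻¹

/-- The Farey word `W_{p/q}(z)`, the product `ℓ_1 ℓ_2 ⋯ ℓ_{2q}` of its letters interpreted
as matrices. -/
noncomputable def fareyWord (α β z : ℂ) (p q : ℕ) : Matrix (Fin 2) (Fin 2) ℂ :=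
  ((List.range (2 * q)).map (fun j => fareyLetterM α β z p q (j + 1))).prod

/-- The Farey polynomial `Φ_{p/q}(z) = tr W_{p/q}(z)`. -/
noncomputable def fareyPoly (α β z : ℂ) (p q : ℕ) : ℂ := Matrix.trace (fareyWord α β z p q)

lemma mceil_eq_floor_add_one (x : ℚ) : mceil x = ⌊x⌋ + 1 := by
  unfold mceil
  split_ifs with h
  · have hx : ((x.num : ℤ) : ℚ) = x := Rat.coe_int_num_of_den_eq_one h
    conv_rhs => rw [← hx]
    rw [Int.floor_intCast]
  · refine le_antisymm (Int.ceil_le_floor_add_one x) ?_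
    rw [Int.add_one_le_iff, Int.lt_ceil]
    refine lt_of_le_of_ne (Int.floor_le x) fun hx => h ?_
    rw [← hx, Rat.den_intCast]

lemma fareySign_eq (p q i : ℕ) :
    fareySign p q i = (-1) ^ ((p * i : ℤ) / (q : ℤ) + (i : ℤ)) := by
  have hfloor : ⌊(p * i : ℚ) / q⌋ = (p * i : ℤ) / (q : ℤ) := by
    have h := Rat.floor_intCast_div_natCast (p * i : ℤ) q
    push_cast at h
    exact h
  rw [fareySign, mceil_eq_floor_add_one, hfloor,
    show (p * i : ℤ) / (q : ℤ) + 1 + (i : ℤ) + 1 = (p * i : ℤ) / (q : ℤ) + i + 2 by ring,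
    zpow_add, zpow_ofNat]
  simp

/-- The letter at position `i` in the parabolic case when the line of the Farey word lies at
integral height `n`. -/
noncomputable def parabolicLetter (z : ℂ) (i : ℕ) (n : ℤ) : Matrix (Fin 2) (Fin 2) ℂ :=
  if Even (n + i) then (if i % 2 = 1 then !![1, 0; z, 1] else !![1, 1; 0, 1])
  else (if i % 2 = 1 then !![1, 0; -z, 1] else !![1, -1; 0, 1])

lemma fareyLetterM_one_one (z : ℂ) (p q i : ℕ) :
    fareyLetterM 1 1 z p q i = parabolicLetter z i ((p * i : ℤ) / (q : ℤ)) := by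
  have hY : (Ymat 1 z)⁻¹ = !![1, 0; -z, 1] := by
    apply Matrix.inv_eq_right_inv
    simp [Ymat, Matrix.one_fin_two]
  have hX : (Xmat 1)⁻¹ = !![1, -1; 0, 1] := by
    apply Matrix.inv_eq_right_inv
    simp [Xmat, Matrix.one_fin_two]
  unfold fareyLetterM parabolicLetter
  rw [fareySign_eq]
  rcases Int.even_or_odd ((p * i : ℤ) / (q : ℤ) + (i : ℤ)) with h | h
  · simp only [h.neg_one_zpow, h, if_true]
    split_ifs <;> simp [Xmat, Ymat]
  · have h1 : ¬ ((-1 : ℤˣ) = 1) := by decide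
    simp only [h.neg_one_zpow, Int.not_even_iff_odd.2 h, h1, if_false]
    split_ifs
    · exact hY
    · exact hX

lemma trace_parabolicLetter (z : ℂ) (i : ℕ) (n : ℤ) :
    (parabolicLetter z i n).trace = 2 := by
  unfold parabolicLetter
  split_ifs <;> simp [Matrix.trace_fin_two] <;> norm_num

lemma parabolicLetter_add_succ (z : ℂ) (i : ℕ) (n : ℤ) :
    parabolicLetter z i n + parabolicLetter z i (n + 1) = (2 : ℂ) • 1 := by
  have h : Even (n + 1 + i) ↔ ¬ Even (n + i) := by
    rw [show n + 1 + (i : ℤ) = n + i + 1 by ring, Int.even_add_one]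
  unfold parabolicLetter
  by_cases he : Even (n + i) <;> by_cases hi : i % 2 = 1 <;>
    simp only [h, he, hi, if_true, if_false, not_true, not_false_iff] <;>
    ext a b <;> fin_cases a <;> fin_cases b <;> simp <;> norm_num

lemma parabolicLetter_mul_eq_one (z : ℂ) {i j : ℕ} {m n : ℤ}
    (hij : Even (i + j)) (hmn : Odd (m + n)) :
    parabolicLetter z i m * parabolicLetter z j n = 1 := by
  have hpar : j % 2 = i % 2 := by grind
  have h : Even (n + j) ↔ ¬ Even (m + i) := by grind
  unfold parabolicLetter
  by_cases he : Even (m + i) <;> by_cases hi : i % 2 = 1 <;>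
    simp only [h, he, hi, hpar, if_true, if_false, not_true, not_false_iff] <;>
    simp [Matrix.one_fin_two]

lemma List.prod_map_range_mul_prod_map_range_eq_one {M : Type*} [Monoid M] (k : ℕ) :
    ∀ f g : ℕ → M, (∀ i j, i + j + 1 = k → f i * g j = 1) →
      ((List.range k).map f).prod * ((List.range k).map g).prod = 1 := by
  induction k with
  | zero => simp
  | succ k ih =>
    intro f g h
    have hfg := ih f (fun j => g (j + 1)) fun i j hij => h i (j + 1) (by omega)
    have hk := h k 0 (by omega)
    have hg : ((List.range (k + 1)).map g).prod =
        g 0 * ((List.range k).map (fun j => g (j + 1))).prod := by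
      rw [List.range_succ_eq_map]
      simp [Function.comp_def]
    have hf : ((List.range (k + 1)).map f).prod = ((List.range k).map f).prod * f k := by
      simp [List.range_succ]
    rw [hg, hf, mul_assoc, ← mul_assoc (f k), hk, one_mul, hfg]

lemma List.prod_map_range_add {M : Type*} [Monoid M] (f : ℕ → M) (m n : ℕ) :
    ((List.range (m + n)).map f).prod =
      ((List.range m).map f).prod * ((List.range n).map (fun j => f (m + j))).prod := by
  simp [List.range_add, Function.comp_def]

/-- Two words that agree except for the middle letter, whose letters in symmetric positions
cancel, have traces adding up to `2 * tr` of the last letter. -/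
lemma trace_prod_add_trace_prod (k : ℕ) (f g : ℕ → Matrix (Fin 2) (Fin 2) ℂ)
    (hcancel : ∀ i j, i + j + 1 = k → f i * f (k + 1 + j) = 1)
    (hfg : ∀ j < 2 * (k + 1), j ≠ k → g j = f j)
    (hmid : g k + f k = (2 : ℂ) • 1) :
    (((List.range (2 * (k + 1))).map g).prod).trace +
      (((List.range (2 * (k + 1))).map f).prod).trace = 2 * (f (2 * k + 1)).trace := by
  have split : ∀ h : ℕ → Matrix (Fin 2) (Fin 2) ℂ,
      ((List.range (2 * (k + 1))).map h).prod =
        ((List.range k).map h).prod * h k *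
          ((List.range k).map (fun j => h (k + 1 + j))).prod * h (2 * k + 1) := by
    intro h
    rw [show 2 * (k + 1) = k + 1 + k + 1 by ring, List.prod_map_range_add h (k + 1 + k) 1,
      List.prod_map_range_add h (k + 1) k, List.prod_map_range_add h k 1]
    simp [show k + 1 + k = 2 * k + 1 by ring]
  have hA : (List.range k).map g = (List.range k).map f :=
    List.map_congr_left fun j hj => by
      have := List.mem_range.1 hj
      exact hfg j (by omega) (by omega)
  have hB : (List.range k).map (fun j => g (k + 1 + j)) =
      (List.range k).map (fun j => f (k + 1 + j)) :=
    List.map_congr_left fun j hj => by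
      have := List.mem_range.1 hj
      exact hfg _ (by omega) (by omega)
  have hAB := List.prod_map_range_mul_prod_map_range_eq_one k f (fun j => f (k + 1 + j)) hcancel
  rw [split g, split f, hA, hB, hfg (2 * k + 1) (by omega) (by omega), ← Matrix.trace_add,
    ← add_mul, ← add_mul, ← mul_add, hmid, mul_smul_comm, mul_one, smul_mul_assoc, hAB,
    smul_mul_assoc, one_mul, Matrix.trace_smul, smul_eq_mul]

lemma Int.ediv_eq_of_bounds {a b c : ℤ} (h₁ : b * c ≤ a) (h₂ : a < b * c + b) :
    a / b = c := by
  have hb : 0 < b := by linarith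
  apply le_antisymm
  · rw [← Int.lt_add_one_iff, Int.ediv_lt_iff_lt_mul hb]
    linarith
  · rw [Int.le_ediv_iff_mul_le hb]
    linarith

/-- Rotation symmetry of the heights along a line of slope `P / Q`. -/
lemma ediv_add_ediv_of_add_eq_two_mul {P Q i j : ℤ} (hPQ : IsCoprime P Q)
    (hi : 0 < i) (hiQ : i < Q) (hij : i + j = 2 * Q) :
    P * i / Q + P * j / Q = 2 * P - 1 := by
  have hQ : 0 < Q := hi.trans hiQ
  have hb : P * i % Q ≠ 0 := fun h => by
    have := Int.le_of_dvd hi (hPQ.symm.dvd_of_dvd_mul_left (Int.dvd_of_emod_eq_zero h))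
    omega
  have h0 := Int.emod_nonneg (P * i) hQ.ne'
  have h1 := Int.emod_lt_of_pos (P * i) hQ
  have h2 := Int.mul_ediv_add_emod (P * i) Q
  obtain rfl : j = 2 * Q - i := by linarith
  have h3 : P * (2 * Q - i) / Q = 2 * P - 1 - P * i / Q := by
    have : 0 < P * i % Q := lt_of_le_of_ne h0 (Ne.symm hb)
    apply Int.ediv_eq_of_bounds <;> linarith
  linarith

/-- Heights along the mediant line and the lower line agree away from the middle. -/
lemma ediv_mediant_left {p q r s i : ℤ} (hq : 0 < q) (hs : 0 < s)
    (hnbr : q * r = p * s + 1) (hi : 0 < i) (hiq : i ≤ 2 * q) (hne : i ≠ q + s) :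
    (p + r) * i / (q + s) = p * i / q := by
  have h0 := Int.emod_nonneg (p * i) hq.ne'
  have h1 := Int.emod_lt_of_pos (p * i) hq
  have h2 := Int.mul_ediv_add_emod (p * i) q
  set a := p * i / q
  set b := p * i % q
  have key : q * ((p + r) * i - (q + s) * a) = (q + s) * b + i := by
    linear_combination i * hnbr - (q + s) * h2
  have hlt : (q + s) * b + i < q * (q + s) := by
    by_cases hb : b ≤ q - 2
    · nlinarith
    · have hb' : b = q - 1 := by omega
      by_contra hcon
      have hi' : q + s < i := by
        have : q + s ≤ i := by rw [hb'] at hcon; nlinarith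
        omega
      have hcop : IsCoprime q p := ⟨r, -s, by linear_combination hnbr⟩
      have hdvd : q ∣ p * (i - s) := ⟨a + 1 - r, by
        linear_combination -h2 + hb' + hnbr⟩
      obtain ⟨c, hc⟩ := hcop.dvd_of_dvd_mul_left hdvd
      have hc1 : 1 < c := by nlinarith
      nlinarith
  apply Int.ediv_eq_of_bounds
  · have : 0 ≤ q * ((p + r) * i - (q + s) * a) := by rw [key]; positivity
    have := nonneg_of_mul_nonneg_right this hq
    linarith
  · have : q * ((p + r) * i - (q + s) * a) < q * (q + s) := by rw [key]; exact hlt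
    have := lt_of_mul_lt_mul_left this hq.le
    linarith

/-- Heights along the mediant line and the translated upper line agree away from the middle. -/
lemma ediv_mediant_right {p q r s j : ℤ} (hq : 0 < q) (hs : 0 < s)
    (hnbr : q * r = p * s + 1) (hj : 0 < j) (hjs : j ≤ 2 * s) (hne : q + j ≠ s) :
    (p + r) * (2 * q + j) / (q + s) = 2 * p + r * j / s := by
  have h0 := Int.emod_nonneg (r * j) hs.ne'
  have h1 := Int.emod_lt_of_pos (r * j) hs
  have h2 := Int.mul_ediv_add_emod (r * j) s
  set a := r * j / s
  set b := r * j % s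
  have key : s * ((p + r) * (2 * q + j) - (q + s) * (2 * p + a)) =
      (q + s) * b + (2 * s - j) := by
    linear_combination (2 * s - j) * hnbr - (q + s) * h2
  have hlt : (q + s) * b + (2 * s - j) < s * (q + s) := by
    by_cases hb : b ≤ s - 2
    · nlinarith
    · have hb' : b = s - 1 := by omega
      by_contra hcon
      have hj' : q + j < s := by
        have : q + j ≤ s := by rw [hb'] at hcon; nlinarith
        omega
      have hcop : IsCoprime s r := ⟨-p, q, by linear_combination hnbr⟩
      have hdvd : s ∣ r * (j + q) := ⟨a + 1 + p, by
        linear_combination -h2 + hb' + hnbr⟩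
      have := Int.le_of_dvd (by linarith) (hcop.dvd_of_dvd_mul_left hdvd)
      linarith
  apply Int.ediv_eq_of_bounds
  · have : 0 ≤ s * ((p + r) * (2 * q + j) - (q + s) * (2 * p + a)) := by
      rw [key]
      have : 0 ≤ (q + s) * b := by positivity
      linarith
    have := nonneg_of_mul_nonneg_right this hs
    linarith
  · have : s * ((p + r) * (2 * q + j) - (q + s) * (2 * p + a)) < s * (q + s) := by
      rw [key]; exact hlt
    have := lt_of_mul_lt_mul_left this hs.le
    linarith

/-- Height above position `i` of the broken line made of two periods of slope `p / q` followed
by two periods of slope `r / s`. -/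
def brokenHeight (p q r s i : ℕ) : ℤ :=
  if i ≤ 2 * q then (p * i : ℤ) / (q : ℤ) else 2 * p + r * ((i : ℤ) - 2 * q) / (s : ℤ)

lemma brokenHeight_eq_mediant {p q r s i : ℕ} (hq : 1 ≤ q) (hs : 1 ≤ s)
    (hnbr : q * r = p * s + 1) (hi : 1 ≤ i) (hi' : i ≤ 2 * (q + s)) (hne : i ≠ q + s) :
    brokenHeight p q r s i = ((p + r : ℕ) * i : ℤ) / ((q + s : ℕ) : ℤ) := by
  have hnbr' : (q : ℤ) * r = p * s + 1 := by exact_mod_cast hnbr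
  unfold brokenHeight
  push_cast
  split_ifs with h
  · exact (ediv_mediant_left (by omega) (by omega) hnbr' (by omega) (by omega) (by omega)).symm
  · rw [← ediv_mediant_right (by omega) (by omega) hnbr' (by omega) (by omega) (by omega)]
    ring_nf

lemma brokenHeight_middle {p q r s : ℕ} (hq : 1 ≤ q) (hs : 1 ≤ s)
    (hnbr : q * r = p * s + 1) :
    brokenHeight p q r s (q + s) + 1 =
      ((p + r : ℕ) * (q + s : ℕ) : ℤ) / ((q + s : ℕ) : ℤ) := by
  have hnbr' : (q : ℤ) * r = p * s + 1 := by exact_mod_cast hnbr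
  rw [Int.mul_ediv_cancel _ (by omega)]
  unfold brokenHeight
  push_cast
  split_ifs with h
  · rw [Int.ediv_eq_of_bounds (c := (p : ℤ) + r - 1)]
    · ring
    · nlinarith
    · nlinarith
  · rw [Int.ediv_eq_of_bounds (c := (r : ℤ) - p - 1)]
    · ring
    · nlinarith
    · nlinarith

lemma fareyWord_mul_fareyWord (z : ℂ) (p q r s : ℕ) :
    fareyWord 1 1 z p q * fareyWord 1 1 z r s =
      ((List.range (2 * (q + s))).map
        (fun j => parabolicLetter z (j + 1) (brokenHeight p q r s (j + 1)))).prod := by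
  rw [mul_add, List.prod_map_range_add]
  unfold fareyWord
  congr 2 <;> refine List.map_congr_left fun j hj => ?_
  · have hle : j + 1 ≤ 2 * q := List.mem_range.1 hj
    rw [fareyLetterM_one_one, brokenHeight, if_pos hle]
  · rw [fareyLetterM_one_one, brokenHeight, if_neg (by omega)]
    have hpos : (((2 * q + j + 1 : ℕ) : ℤ) - 2 * q) = ((j + 1 : ℕ) : ℤ) := by
      push_cast; ring
    rw [hpos]
    have hmod : (2 * q + j + 1) % 2 = (j + 1) % 2 := by omega
    unfold parabolicLetter
    rw [hmod]
    have : Even (2 * (p : ℤ) + r * ((j + 1 : ℕ) : ℤ) / (s : ℤ) + ((2 * q + j + 1 : ℕ) : ℤ)) ↔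
        Even (r * ((j + 1 : ℕ) : ℤ) / (s : ℤ) + ((j + 1 : ℕ) : ℤ)) := by
      generalize (r * ((j + 1 : ℕ) : ℤ) / (s : ℤ)) = a
      grind
    simp only [this]

/-- Product lemma in the parabolic case `α = β = 1`: for Farey neighbours `p/q < r/s`
in `[0,1]`, `tr(W_{p/q} W_{r/s}) = 4 − tr(W_{(p+r)/(q+s)})`. -/
theorem product_parabolic (z : ℂ)
    (p q r s : ℕ) (hq : 1 ≤ q) (hs : 1 ≤ s) (hpq : p ≤ q) (hrs : r ≤ s)
    (hcop1 : Nat.Coprime p q) (hcop2 : Nat.Coprime r s) (hnbr : q * r = p * s + 1) :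
    Matrix.trace (fareyWord 1 1 z p q * fareyWord 1 1 z r s) =
      4 - Matrix.trace (fareyWord 1 1 z (p + r) (q + s)) := by
  obtain ⟨k, hk⟩ : ∃ k, q + s = k + 1 := ⟨q + s - 1, by omega⟩
  have hcop : IsCoprime ((p + r : ℕ) : ℤ) ((q + s : ℕ) : ℤ) :=
    ⟨q, -p, by
      have hnbr' : (q : ℤ) * r = p * s + 1 := by exact_mod_cast hnbr
      push_cast
      linear_combination hnbr'⟩
  rw [fareyWord_mul_fareyWord, eq_sub_iff_add_eq, fareyWord]
  simp only [fareyLetterM_one_one]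
  rw [hk] at hcop ⊢
  rw [trace_prod_add_trace_prod k, trace_parabolicLetter]
  · norm_num
  · intro i j hij
    apply parabolicLetter_mul_eq_one
    · exact ⟨k + 1, by omega⟩
    · rw [ediv_add_ediv_of_add_eq_two_mul hcop (by omega) (by omega) (by omega)]
      exact ⟨((p + r : ℕ) : ℤ) - 1, by ring⟩
  · intro j hj hjk
    rw [brokenHeight_eq_mediant hq hs hnbr (by omega) (by omega) (by omega), hk]
  · have hmid := brokenHeight_middle hq hs hnbr
    rw [hk] at hmid
    rw [← hmid, parabolicLetter_add_succ]
end

section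
/- Let R be a commutative ring and let F be a homogeneous Farey recursive function with values in R. Let δ and α be normalised pairs which are Farey neighbours, and for each integer n ≥ −1 set γ_n = δ + (n+1)·α (componentwise addition of pairs), so that γ_{−1} = δ and γ_{n+1} = γ_n ⊕ α. Then for every n ≥ 0 one has F(γ_{n+1}) = −F(α)·F(γ_n) − F(γ_{n−1}); that is, the sequence (F(γ_n))_{n ≥ −1} satisfies the Chebyshev recurrence c_{n+1} = 2t·c_n − c_{n−1} with parameter t = −F(α)/2. -/
/-- A normalised pair `(p, q) ∈ ℤ × ℤ` representing an extended rational: `gcd(p,q) = 1`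
and either `q > 0`, or `q = 0` and `p = 1` (representing `∞`). -/
def Normalised (x : ℤ × ℤ) : Prop :=
  Int.gcd x.1 x.2 = 1 ∧ (0 < x.2 ∨ (x.2 = 0 ∧ x.1 = 1))

/-- Two pairs `(p,q)` and `(r,s)` are Farey neighbours if `|ps − qr| = 1`.
Their mediant is the componentwise sum `(p+r, q+s)`. -/
def FareyNbr (x y : ℤ × ℤ) : Prop := (x.1 * y.2 - x.2 * y.1).natAbs = 1

/-- `F` is a homogeneous Farey recursive function:
`F((γ ⊕ α) ⊕ α) = −F(γ) − F(α)·F(γ ⊕ α)` for Farey neighbours `γ, α`. -/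
def IsHomFareyRecursive {R : Type*} [CommRing R] (F : ℤ × ℤ → R) : Prop :=
  ∀ γ α : ℤ × ℤ, Normalised γ → Normalised α → FareyNbr γ α →
    F (γ + α + α) = -F γ - F α * F (γ + α)

/-- Adding a multiple of the second pair preserves being Farey neighbours. -/
theorem FareyNbr.add_zsmul {x y : ℤ × ℤ} (h : FareyNbr x y) (n : ℤ) :
    FareyNbr (x + n • y) y := by
  have hdet : (x.1 + n * y.1) * y.2 - (x.2 + n * y.2) * y.1 = x.1 * y.2 - x.2 * y.1 := by ring
  simpa [FareyNbr, hdet] using h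

/-- The entries of a pair with a Farey neighbour are coprime. -/
theorem FareyNbr.gcd_eq_one {x y : ℤ × ℤ} (h : FareyNbr x y) : Int.gcd x.1 x.2 = 1 := by
  rw [← Int.isCoprime_iff_gcd_eq_one]
  rcases Int.natAbs_eq_iff.mp h with h | h
  · exact ⟨y.2, -y.1, by push_cast at h; linear_combination h⟩
  · exact ⟨-y.2, y.1, by push_cast at h; linear_combination -h⟩

/-- Iterated mediants of normalised Farey neighbours are normalised. -/
theorem Normalised.add_zsmul {x y : ℤ × ℤ} (hx : Normalised x) (hy : Normalised y)
    (h : FareyNbr x y) {n : ℤ} (hn : 0 ≤ n) : Normalised (x + n • y) := by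
  refine ⟨(h.add_zsmul n).gcd_eq_one, ?_⟩
  simp only [Prod.fst_add, Prod.snd_add, Prod.smul_fst, Prod.smul_snd, smul_eq_mul]
  rcases hx.2 with hx2 | ⟨hx2, hx1⟩
  · have hy2 : 0 ≤ y.2 := by rcases hy.2 with h | h <;> omega
    exact Or.inl (by positivity)
  · rcases hy.2 with hy2 | ⟨hy2, -⟩
    · rcases hn.eq_or_lt with rfl | hn
      · exact Or.inr (by simp [hx2, hx1])
      · exact Or.inl (by rw [hx2]; positivity)
    · simp [FareyNbr, hx2, hy2] at h

/-- Along the constant-difference sequence `γ_n = δ + (n+1)·α` (for Farey neighbours `δ, α`),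
a homogeneous Farey recursive function satisfies the Chebyshev-like recurrence
`F(γ_{n+1}) = −F(α)·F(γ_n) − F(γ_{n−1})`. -/
theorem hom_farey_recursive_chebyshev {R : Type*} [CommRing R] (F : ℤ × ℤ → R)
    (hF : IsHomFareyRecursive F)
    (δ α : ℤ × ℤ) (hδ : Normalised δ) (hα : Normalised α) (hnbr : FareyNbr δ α)
    (γ : ℤ → ℤ × ℤ) (hγ : ∀ n : ℤ, γ n = δ + (n + 1) • α) :
    ∀ n : ℤ, 0 ≤ n → F (γ (n + 1)) = -F α * F (γ n) - F (γ (n - 1)) := by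
  intro n hn
  have hrec := hF (δ + n • α) α (hδ.add_zsmul hα hnbr hn) hα (hnbr.add_zsmul n)
  have h_pred : γ (n - 1) = δ + n • α := by rw [hγ, sub_add_cancel]
  have h_self : γ n = δ + n • α + α := by rw [hγ]; module
  have h_succ : γ (n + 1) = δ + n • α + α + α := by rw [hγ]; module
  rw [h_pred, h_self, h_succ, hrec]
  ring
end
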